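/- arXiv:2407.19574 — 2 statements merged into one kernel-verified Lean document; each statement's English description precedes it below -/
import Mathlib

section
/- Let C be a localizing subcategory of the derived category D(Mod R) of a ring R. If X* is a bounded-above complex of R-modules such that each term X^i lies in C (viewed as a complex concentrated in one degree), then X* lies in C. -/
/-!
STATEMENT 3: Let `C` be a localizing subcategory of the derived category
`D(Mod R)` of a ring `R`.  If `X*` is a bounded-above complex of `R`-modules
such that each term `X^i` lies in `C` (viewed as a complex concentrated in one
degree), then `X*` lies in `C`.
-/

open CategoryTheory CategoryTheory.Limits CategoryTheory.Pretriangulated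

universe w u

/-- A localizing subcategory of a (pre)triangulated category with coproducts. -/
structure IsLocalizing (C : Type*) [Category C] [HasZeroObject C]
    [Preadditive C] [HasShift C ℤ] [∀ n : ℤ, (shiftFunctor C n).Additive]
    [Pretriangulated C] [HasCoproducts.{u} C] (P : C → Prop) : Prop where
  zero : ∀ X : C, IsZero X → P X
  iso_closed : ∀ {X Y : C}, (X ≅ Y) → P X → P Y
  shift_closed : ∀ (X : C) (n : ℤ), P X → P (X⟦n⟧)
  ext_closed : ∀ T ∈ distinguishedTriangles (C := C),
      P T.obj₁ → P T.obj₃ → P T.obj₂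
  coproduct_closed : ∀ {J : Type u} (f : J → C), (∀ j, P (f j)) → P (∐ f)

/-!
A complex `X` is the union of its brutal truncations `σ_{≥ -k} X`, and each inclusion
`σ_{≥ -k} X ⟶ σ_{≥ -(k + 1)} X` has a single term of `X` as cokernel. When `X` is bounded above,
every `σ_{≥ -k} X` is therefore a finite extension of shifts of terms of `X`. The union is the
cokernel of `1 - shift : ∐ σ_{≥ -k} X ⟶ ∐ σ_{≥ -k} X`, a monomorphism because the inclusions split
degreewise, so `X` is a cone of an endomorphism of `∐ σ_{≥ -k} X`. This coproduct of complexes is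
also a coproduct in the derived category: countable coproducts are exact, so quasi-isomorphisms,
and with them the roofs representing morphisms of the derived category, can be glued along them.
-/

section QuasiIso

open HomologicalComplex

variable {A : Type*} [Category* A] [Abelian A] {J : Type*} [Category* J] {ι : Type*}
  {c : ComplexShape ι}

/-- A diagram of complexes regarded as a complex of diagrams, so that exactness of colimits of
shape `J` in `A` can be applied degree by degree. -/
def complexOfFunctors (F : J ⥤ HomologicalComplex A c) : HomologicalComplex (J ⥤ A) c where
  X i := F ⋙ eval A c i
  d i j :=
    { app k := (F.obj k).d i j
      naturality _ _ g := (F.map g).comm i j }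
  shape i j hij := by ext k; exact (F.obj k).shape i j hij
  d_comp_d' i j k _ _ := by ext l; exact (F.obj l).d_comp_d i j k

/-- The action of `complexOfFunctors` on morphisms of diagrams. -/
def complexOfFunctorsMap {F G : J ⥤ HomologicalComplex A c} (φ : F ⟶ G) :
    complexOfFunctors F ⟶ complexOfFunctors G where
  f i := Functor.whiskerRight φ (eval A c i)
  comm' i j _ := by ext k; exact (φ.app k).comm i j

instance isStableUnderColimitsOfShape_quasiIso [HasColimitsOfShape J A]
    [HasExactColimitsOfShape J A] :
    (quasiIso A c).IsStableUnderColimitsOfShape J where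
  condition F G c₁ c₂ h₁ h₂ φ hφ f hf := by
    let g : (coconeOfHasColimitEval F).pt ⟶ (coconeOfHasColimitEval G).pt :=
      ((colim (J := J) (C := A)).mapHomologicalComplex c).map (complexOfFunctorsMap φ)
    have ι_g (k : J) : (coconeOfHasColimitEval F).ι.app k ≫ g =
        φ.app k ≫ (coconeOfHasColimitEval G).ι.app k := by
      ext i
      exact ι_colimMap (Functor.whiskerRight φ (eval A c i)) k
    have quasiIso_g : QuasiIso g := by
      have : QuasiIso (complexOfFunctorsMap φ) :=
        (quasiIso_iff_evaluation _).2 fun k => hφ k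
      exact inferInstanceAs (QuasiIso
        (((colim (J := J) (C := A)).mapHomologicalComplex c).map (complexOfFunctorsMap φ)))
    refine ((quasiIso A c).arrow_mk_iso_iff (Arrow.isoMk
      (h₁.coconePointUniqueUpToIso (isColimitCoconeOfHasColimitEval F))
      (h₂.coconePointUniqueUpToIso (isColimitCoconeOfHasColimitEval G))
      (h₁.hom_ext fun k => ?_))).2 quasiIso_g
    simp [reassoc_of% (hf k), ι_g]

lemma quasiIso_sigmaDesc_comp_inj {J : Type*} [HasColimitsOfShape (Discrete J) A]
    [HasExactColimitsOfShape (Discrete J) A] {K L : J → HomologicalComplex A c} {a : Cofan K}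
    (ha : IsColimit a) (s : ∀ j, L j ⟶ K j) (hs : ∀ j, QuasiIso (s j)) :
    QuasiIso (Sigma.desc fun j => s j ≫ a.inj j) :=
  isStableUnderColimitsOfShape_quasiIso.condition _ _ _ _ (coproductIsCoproduct L) ha
    (Discrete.natTrans fun j => s j.as) (fun j => hs j.as) _ fun j => by simp [Cofan.inj]

end QuasiIso

section Homotopy

open HomologicalComplex

variable {A : Type*} [Category* A] [Preadditive A] [HasBinaryBiproducts A] {J : Type*}

/-- A homotopy between morphisms out of a coproduct of complexes, glued from homotopies on the
summands. It is encoded as a morphism to the path object of `Y`, where gluing is the universal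
property. -/
noncomputable def homotopyOfIsColimitCofan {K : J → CochainComplex A ℤ} {c : Cofan K}
    (hc : IsColimit c) {Y : CochainComplex A ℤ} {f g : c.pt ⟶ Y}
    (h : ∀ j, Homotopy (c.inj j ≫ f) (c.inj j ≫ g)) : Homotopy f g :=
  let φ : c.pt ⟶ Y.pathObject :=
    Cofan.IsColimit.desc hc fun j => pathObject.lift _ _ (h j)
  have hf : φ ≫ pathObject.π₀ Y = f := Cofan.IsColimit.hom_ext hc _ _ fun j => by simp [φ]
  have hg : φ ≫ pathObject.π₁ Y = g := Cofan.IsColimit.hom_ext hc _ _ fun j => by simp [φ]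
  (Homotopy.ofEq hf.symm).trans
    (((pathObject.homotopy₀₁ Y fun i => ⟨i + 1, rfl⟩).compLeft φ).trans (Homotopy.ofEq hg))

end Homotopy

section Localization

open DerivedCategory

variable {A : Type*} [Category* A] [Abelian A] [HasDerivedCategory.{w} A] {J : Type*}

lemma exists_quasiIso_homotopy_of_Q_map_eq {K Y : CochainComplex A ℤ} {f g : K ⟶ Y}
    (h : Q.map f = Q.map g) :
    ∃ (K' : CochainComplex A ℤ) (s : K' ⟶ K),
      QuasiIso s ∧ Nonempty (Homotopy (s ≫ f) (s ≫ g)) := by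
  have hQh : Qh.map ((HomotopyCategory.quotient A (.up ℤ)).map f) =
      Qh.map ((HomotopyCategory.quotient A (.up ℤ)).map g) := by
    rw [← cancel_mono ((quotientCompQhIso A).hom.app Y), quotientCompQhIso_hom_naturality,
      quotientCompQhIso_hom_naturality, h]
  obtain ⟨K', s, hs, hsfg⟩ :=
    (MorphismProperty.map_eq_iff_precomp Qh (HomotopyCategory.quasiIso A (.up ℤ)) _ _).1 hQh
  obtain ⟨K', rfl⟩ := HomotopyCategory.quotient_obj_surjective K'
  obtain ⟨s, rfl⟩ := (HomotopyCategory.quotient A (.up ℤ)).map_surjective s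
  rw [← Functor.map_comp, ← Functor.map_comp] at hsfg
  exact ⟨K', s, (HomotopyCategory.quotient_map_mem_quasiIso_iff s).1 hs,
    ⟨HomotopyCategory.homotopyOfEq _ _ hsfg⟩⟩

variable [HasColimitsOfShape (Discrete J) A] [HasExactColimitsOfShape (Discrete J) A]
  {K : J → CochainComplex A ℤ}

lemma hom_ext_of_isColimit_cofan_Q {c : Cofan K} (hc : IsColimit c) {Y : DerivedCategory A}
    {f g : Q.obj c.pt ⟶ Y} (hfg : ∀ j, Q.map (c.inj j) ≫ f = Q.map (c.inj j) ≫ g) :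
    f = g := by
  wlog hY : ∃ Y', Y = Q.obj Y' generalizing Y
  · rw [← cancel_mono (Q.objObjPreimageIso Y).inv]
    exact this (fun j => by rw [reassoc_of% (hfg j)]) ⟨_, rfl⟩
  obtain ⟨Y, rfl⟩ := hY
  rw [← sub_eq_zero]
  obtain ⟨Y', h, t, _, hfac⟩ := left_fac (f - g)
  have hQ (j : J) : Q.map (c.inj j ≫ h) = Q.map 0 := by
    rw [← cancel_mono (inv (Q.map t)), Q.map_comp, Category.assoc, ← hfac, Preadditive.comp_sub,
      hfg, sub_self, Functor.map_zero, zero_comp]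
  choose L s hs hh using fun j => exists_quasiIso_homotopy_of_Q_map_eq (hQ j)
  let S : (∐ L) ⟶ c.pt := Sigma.desc fun j => s j ≫ c.inj j
  have : IsIso (Q.map S) :=
    (isIso_Q_map_iff_quasiIso _ S).2 (quasiIso_sigmaDesc_comp_inj hc s hs)
  have hSh : Homotopy (S ≫ h) 0 := homotopyOfIsColimitCofan (coproductIsCoproduct L) fun j =>
    (Homotopy.ofEq (by simp [S])).trans ((hh j).some.trans (Homotopy.ofEq (by simp)))
  have hh0 : Q.map h = 0 := by
    rw [← cancel_epi (Q.map S), ← Q.map_comp, Q_map_eq_of_homotopy _ hSh, Q.map_zero, comp_zero]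
  rw [hfac, hh0, zero_comp]

lemma exists_desc_of_isColimit_cofan_Q {c : Cofan K} (hc : IsColimit c) {Y : DerivedCategory A}
    (g : ∀ j, Q.obj (K j) ⟶ Y) :
    ∃ h : Q.obj c.pt ⟶ Y, ∀ j, Q.map (c.inj j) ≫ h = g j := by
  wlog hY : ∃ Y', Y = Q.obj Y' generalizing Y
  · obtain ⟨h, hh⟩ := this (fun j => g j ≫ (Q.objObjPreimageIso Y).inv) ⟨_, rfl⟩
    exact ⟨h ≫ (Q.objObjPreimageIso Y).hom, fun j => by simp [reassoc_of% (hh j)]⟩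
  obtain ⟨Y, rfl⟩ := hY
  choose L s hs f hf using fun j => right_fac (g j)
  let S : (∐ L) ⟶ c.pt := Sigma.desc fun j => s j ≫ c.inj j
  have : IsIso (Q.map S) := (isIso_Q_map_iff_quasiIso _ S).2
    (quasiIso_sigmaDesc_comp_inj hc s fun j => (isIso_Q_map_iff_quasiIso _ _).1 (hs j))
  refine ⟨inv (Q.map S) ≫ Q.map (Sigma.desc f), fun j => ?_⟩
  have hS : Q.map (s j) ≫ Q.map (c.inj j) = Q.map (Sigma.ι L j) ≫ Q.map S := by
    rw [← Q.map_comp, ← Q.map_comp, Sigma.ι_desc]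
  have := hs j
  rw [hf, ← cancel_epi (Q.map (s j)), reassoc_of% hS, IsIso.hom_inv_id_assoc,
    IsIso.hom_inv_id_assoc, ← Q.map_comp, Sigma.ι_desc]

/-- `Q` sends the coproduct cofan of a family of complexes to a coproduct cofan. -/
noncomputable def isColimitCofanMkQ {c : Cofan K} (hc : IsColimit c) :
    IsColimit (Cofan.mk (Q.obj c.pt) fun j => Q.map (c.inj j)) :=
  Cofan.IsColimit.mk _ (fun t => (exists_desc_of_isColimit_cofan_Q hc t.inj).choose)
    (fun t => (exists_desc_of_isColimit_cofan_Q hc t.inj).choose_spec)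
    fun t _ hm => hom_ext_of_isColimit_cofan_Q hc fun j =>
      (hm j).trans ((exists_desc_of_isColimit_cofan_Q hc t.inj).choose_spec j).symm

end Localization

section Telescope

variable {C : Type*} [Category* C] {F : ℕ ⥤ C} {a : Cofan F.obj} {c : Cocone F}

/-- The comparison morphism from the coproduct of the terms of a sequence to a cocone point. -/
noncomputable def telescopeDesc (ha : IsColimit a) (c : Cocone F) : a.pt ⟶ c.pt :=
  Cofan.IsColimit.desc ha c.ι.app

lemma inj_telescopeDesc (ha : IsColimit a) (c : Cocone F) (n : ℕ) :
    a.inj n ≫ telescopeDesc ha c = c.ι.app n :=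
  Cofan.IsColimit.fac ..

variable [Preadditive C]

/-- The endomorphism `1 - shift` of the coproduct of the terms of a sequence. -/
noncomputable def telescopeMap (ha : IsColimit a) : a.pt ⟶ a.pt :=
  Cofan.IsColimit.desc ha fun n => a.inj n - F.map (homOfLE n.le_succ) ≫ a.inj (n + 1)

lemma inj_telescopeMap (ha : IsColimit a) (n : ℕ) :
    a.inj n ≫ telescopeMap ha = a.inj n - F.map (homOfLE n.le_succ) ≫ a.inj (n + 1) :=
  Cofan.IsColimit.fac ..

lemma telescopeMap_comp_telescopeDesc (ha : IsColimit a) (c : Cocone F) :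
    telescopeMap ha ≫ telescopeDesc ha c = 0 :=
  Cofan.IsColimit.hom_ext ha _ _ fun n => by
    simp [reassoc_of% (inj_telescopeMap ha), inj_telescopeDesc]

/-- The presentation of the colimit of a sequence as the cokernel of `telescopeMap` on the coproduct
of its terms. -/
noncomputable def isColimitTelescopeCofork (ha : IsColimit a) (hc : IsColimit c) :
    IsColimit (CokernelCofork.ofπ (telescopeDesc ha c) (telescopeMap_comp_telescopeDesc ha c)) :=
  CokernelCofork.IsColimit.ofπ _ _
    (fun k hk => hc.desc
      { pt := _
        ι := NatTrans.ofSequence (fun n => a.inj n ≫ k) fun n => by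
          symm
          simpa [reassoc_of% (inj_telescopeMap ha), sub_eq_zero] using a.inj n ≫= hk })
    (fun k hk => Cofan.IsColimit.hom_ext ha _ _ fun n => by
      simp [reassoc_of% (inj_telescopeDesc ha)])
    (fun k hk m hm => hc.hom_ext fun n => by simp [← hm, reassoc_of% (inj_telescopeDesc ha)])

lemma isSplitMono_of_inj_comp_eq_sub {X : ℕ → C} {f : ∀ n, X n ⟶ X (n + 1)}
    [∀ n, IsSplitMono (f n)] {a : Cofan X} (ha : IsColimit a) {t : a.pt ⟶ a.pt}
    (ht : ∀ n, a.inj n ≫ t = a.inj n - f n ≫ a.inj (n + 1)) : IsSplitMono t := by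
  -- `r` solves `r n - f n ≫ r (n + 1) = a.inj n` recursively, with `r 0 = 0`.
  let r (n : ℕ) : X n ⟶ a.pt :=
    n.rec 0 fun n rn => retraction (f n) ≫ (rn - a.inj n)
  have f_r (n : ℕ) : f n ≫ r (n + 1) = r n - a.inj n := by
    change f n ≫ retraction (f n) ≫ (r n - a.inj n) = _
    simp
  exact .mk' ⟨Cofan.IsColimit.desc ha r, Cofan.IsColimit.hom_ext ha _ _ fun n => by
    simp [reassoc_of% (ht n), f_r]⟩

end Telescope

section TelescopeComplex

open HomologicalComplex

variable {A : Type*} [Category* A] [Abelian A] {ι : Type*} {c : ComplexShape ι}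
  {F : ℕ ⥤ HomologicalComplex A c}

lemma telescope_shortExact [HasColimitsOfShape (Discrete ℕ) A] {a : Cofan F.obj} (ha : IsColimit a)
    {d : Cocone F} (hd : IsColimit d)
    (hF : ∀ n i, IsSplitMono ((F.map (homOfLE (Nat.le_succ n))).f i)) :
    (ShortComplex.mk _ _ (telescopeMap_comp_telescopeDesc ha d)).ShortExact where
  exact := ShortComplex.exact_of_g_is_cokernel _ (isColimitTelescopeCofork ha hd)
  mono_f := by
    refine mono_of_mono_f _ fun i => ?_
    have hi : IsColimit (Cofan.mk (a.pt.X i) fun n => (a.inj n).f i) :=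
      isColimitCofanMkObjOfIsColimit (eval A c i) _ _ ha
    have := isSplitMono_of_inj_comp_eq_sub hi (t := (telescopeMap ha).f i)
      fun n => congr_hom (inj_telescopeMap ha n) i
    exact inferInstanceAs (Mono ((telescopeMap ha).f i))
  epi_g := Cofork.IsColimit.epi (isColimitTelescopeCofork ha hd)

end TelescopeComplex

section IsLocalizing

variable {C : Type*} [Category* C] [HasZeroObject C] [Preadditive C] [HasShift C ℤ]
  [∀ n : ℤ, (shiftFunctor C n).Additive] [Pretriangulated C] [HasCoproducts.{u} C]
  {P : C → Prop}

lemma IsLocalizing.prop_of_isColimit_cofan (hP : IsLocalizing.{u} C P) {J : Type*} [Small.{u} J]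
    {X : J → C} {a : Cofan X} (ha : IsColimit a) (h : ∀ j, P (X j)) : P a.pt :=
  have : HasCoproduct X := ⟨a, ha⟩
  hP.iso_closed
    (Sigma.reindex (equivShrink J).symm X ≪≫
      (coproductIsCoproduct X).coconePointUniqueUpToIso ha)
    (hP.coproduct_closed _ fun _ => h _)

lemma IsLocalizing.ext_closed₃ (hP : IsLocalizing.{u} C P) {T : Triangle C}
    (hT : T ∈ distTriang C) (h₁ : P T.obj₁) (h₂ : P T.obj₂) : P T.obj₃ :=
  hP.ext_closed _ (rot_of_distTriang _ hT) h₂ (hP.shift_closed _ 1 h₁)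

end IsLocalizing

section StupidTrunc

open HomologicalComplex

variable {ι ι' : Type*} {c : ComplexShape ι} {c' : ComplexShape ι'} {C : Type*} [Category* C]
  [HasZeroMorphisms C] [HasZeroObject C] (K : HomologicalComplex C c') (e : c.Embedding c')

lemma stupidTruncXIso_hom_comp_d [e.IsRelIff] {i j : ι} {i' j' : ι'} (hi : e.f i = i')
    (hj : e.f j = j') :
    (K.stupidTruncXIso e hi).hom ≫ K.d i' j' =
      (K.stupidTrunc e).d i' j' ≫ (K.stupidTruncXIso e hj).hom := by
  change ((K.restriction e).extendXIso e hi ≪≫ K.restrictionXIso e hi).hom ≫ _ =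
    ((K.restriction e).extend e).d i' j' ≫
      ((K.restriction e).extendXIso e hj ≪≫ K.restrictionXIso e hj).hom
  simp only [extend_d_eq _ e hi hj, restriction_d_eq _ e hi hj, Iso.trans_hom, Category.assoc,
    Iso.inv_hom_id_assoc, Iso.inv_hom_id, Category.comp_id]

variable [e.IsTruncGE]

open Classical in
/-- The inclusion of the brutal truncation `K.stupidTrunc e` in `K`. It is a morphism of
complexes because the image of `e` is closed under successors. -/
noncomputable def stupidTruncι : K.stupidTrunc e ⟶ K where
  f i' := if h : ∃ i, e.f i = i' then (K.stupidTruncXIso e h.choose_spec).hom else 0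
  comm' i' j' hij := by
    by_cases hi : ∃ i, e.f i = i'
    · obtain ⟨i, rfl⟩ := hi
      have hi : ∃ j, e.f j = e.f i := ⟨i, rfl⟩
      have hj : ∃ j, e.f j = j' := e.mem_next hij
      rw [dif_pos hi, dif_pos hj, stupidTruncXIso_hom_comp_d]
    · exact (K.isZero_stupidTrunc_X e i' (by simpa using hi)).eq_of_src _ _

instance isIso_stupidTruncι_f (i : ι) : IsIso ((stupidTruncι K e).f (e.f i)) := by
  have h : ∃ j, e.f j = e.f i := ⟨i, rfl⟩
  dsimp only [stupidTruncι]
  rw [dif_pos h]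
  infer_instance

instance mono_stupidTruncι_f (i' : ι') : Mono ((stupidTruncι K e).f i') := by
  by_cases hi : ∃ i, e.f i = i'
  · obtain ⟨i, rfl⟩ := hi
    infer_instance
  · exact (K.isZero_stupidTrunc_X e i' (by simpa using hi)).mono _

instance mono_stupidTruncι : Mono (stupidTruncι K e) := mono_of_mono_f _ inferInstance

lemma exists_stupidTrunc_lift {L : HomologicalComplex C c'} [L.IsStrictlySupported e]
    (φ : L ⟶ K) : ∃ ψ : L ⟶ K.stupidTrunc e, ψ ≫ stupidTruncι K e = φ := by
  have h (i' : ι') : ∃ ψ : L.X i' ⟶ (K.stupidTrunc e).X i',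
      ψ ≫ (stupidTruncι K e).f i' = φ.f i' := by
    by_cases hi : ∃ i, e.f i = i'
    · obtain ⟨i, rfl⟩ := hi
      exact ⟨φ.f _ ≫ inv ((stupidTruncι K e).f (e.f i)), by simp⟩
    · exact ⟨0, (L.isZero_X_of_isStrictlySupported e i' (by simpa using hi)).eq_of_src _ _⟩
  choose ψ hψ using h
  have comm (i' j' : ι') : ψ i' ≫ (K.stupidTrunc e).d i' j' = L.d i' j' ≫ ψ j' := by
    rw [← cancel_mono ((stupidTruncι K e).f j'), Category.assoc, Category.assoc, hψ, ← Hom.comm,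
      reassoc_of% hψ, Hom.comm]
  exact ⟨{ f := ψ, comm' i' j' _ := comm i' j' }, by ext; exact hψ _⟩

end StupidTrunc

section StupidTruncGE

open HomologicalComplex ComplexShape

variable {C : Type*} [Category* C] [HasZeroMorphisms C] [HasZeroObject C]
  (X : CochainComplex C ℤ)

/-- The brutal truncation `σ_{≥ m} X`. -/
noncomputable abbrev stupidTruncGE (m : ℤ) : CochainComplex C ℤ :=
  X.stupidTrunc (embeddingUpIntGE m)

/-- The inclusion `σ_{≥ m} X ⟶ X`. -/
noncomputable abbrev stupidTruncGEι (m : ℤ) : stupidTruncGE X m ⟶ X :=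
  stupidTruncι X (embeddingUpIntGE m)

lemma isIso_stupidTruncGEι_f {m i : ℤ} (hi : m ≤ i) : IsIso ((stupidTruncGEι X m).f i) := by
  obtain ⟨k, rfl⟩ := Int.le.dest hi
  exact isIso_stupidTruncι_f X (embeddingUpIntGE m) k

lemma isZero_stupidTruncGE_X {m i : ℤ} (hi : i < m) : IsZero ((stupidTruncGE X m).X i) :=
  X.isZero_stupidTrunc_X _ i ((notMem_range_embeddingUpIntGE_iff m i).2 hi)

lemma exists_stupidTruncGE_transition {p q : ℤ} (hqp : q ≤ p) :
    ∃ τ : stupidTruncGE X p ⟶ stupidTruncGE X q, τ ≫ stupidTruncGEι X q = stupidTruncGEι X p :=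
  have : (stupidTruncGE X p).IsStrictlyGE p :=
    inferInstanceAs ((X.stupidTrunc (embeddingUpIntGE p)).IsStrictlySupported _)
  have : (stupidTruncGE X p).IsStrictlySupported (embeddingUpIntGE q) :=
    (stupidTruncGE X p).isStrictlyGE_of_ge q p hqp
  exists_stupidTrunc_lift X (embeddingUpIntGE q) (stupidTruncGEι X p)

/-- The inclusion `σ_{≥ p} X ⟶ σ_{≥ q} X` for `q ≤ p`. -/
noncomputable def stupidTruncGETransition {p q : ℤ} (hqp : q ≤ p) :
    stupidTruncGE X p ⟶ stupidTruncGE X q :=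
  (exists_stupidTruncGE_transition X hqp).choose

@[simp]
lemma stupidTruncGETransition_comp_ι {p q : ℤ} (hqp : q ≤ p) :
    stupidTruncGETransition X hqp ≫ stupidTruncGEι X q = stupidTruncGEι X p :=
  (exists_stupidTruncGE_transition X hqp).choose_spec

lemma isIso_stupidTruncGETransition_f {p q i : ℤ} (hqp : q ≤ p) (hi : p ≤ i ∨ i < q) :
    IsIso ((stupidTruncGETransition X hqp).f i) := by
  rcases hi with hi | hi
  · have := isIso_stupidTruncGEι_f X hi
    have := isIso_stupidTruncGEι_f X (hqp.trans hi)
    exact IsIso.of_isIso_fac_right (congr_hom (stupidTruncGETransition_comp_ι X hqp) i)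
  · exact isIso_of_source_target_iso_zero _ (isZero_stupidTruncGE_X X (hi.trans_le hqp)).isoZero
      (isZero_stupidTruncGE_X X hi).isoZero

lemma isSplitMono_stupidTruncGETransition_f {p q : ℤ} (hqp : q ≤ p) (i : ℤ) :
    IsSplitMono ((stupidTruncGETransition X hqp).f i) := by
  rcases le_or_gt p i with hi | hi
  · have := isIso_stupidTruncGETransition_f X hqp (.inl hi)
    infer_instance
  · exact .mk' ⟨0, (isZero_stupidTruncGE_X X hi).eq_of_src _ _⟩

/-- The increasing sequence `k ↦ σ_{≥ m - k} X` of brutal truncations. -/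
noncomputable def stupidTruncGEFiltration (m : ℤ) : ℕ ⥤ CochainComplex C ℤ where
  obj k := stupidTruncGE X (m - k)
  map {k l} h := stupidTruncGETransition X (by have := leOfHom h; lia)
  map_id k := by simp [← cancel_mono (stupidTruncι X _)]
  map_comp h h' := by simp [← cancel_mono (stupidTruncι X _)]

/-- The inclusions in `X` of its brutal truncations, as a cocone. -/
noncomputable def stupidTruncGECocone (m : ℤ) : Cocone (stupidTruncGEFiltration X m) where
  pt := X
  ι :=
    { app k := stupidTruncGEι X (m - k)
      naturality k l h := by
        have := leOfHom h
        exact (stupidTruncGETransition_comp_ι X (by lia)).trans (Category.comp_id _).symm }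

/-- `X` is the colimit of its brutal truncations, because the sequence is eventually constant in
each degree. -/
noncomputable def isColimitStupidTruncGECocone (m : ℤ) :
    IsColimit (stupidTruncGECocone X m) :=
  isColimitOfEval _ _ fun i =>
    have h : (stupidTruncGEFiltration X m ⋙ eval C _ i).IsEventuallyConstantFrom
        (m - i).toNat := fun k f =>
      isIso_stupidTruncGETransition_f X _ (.inl (by lia))
    have : IsIso (((eval C _ i).mapCocone (stupidTruncGECocone X m)).ι.app (m - i).toNat) :=
      isIso_stupidTruncGEι_f X (by lia)
    h.isColimitOfIsIso _

lemma isZero_stupidTruncGE {n : ℤ} (hX : ∀ i, n ≤ i → IsZero (X.X i)) :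
    IsZero (stupidTruncGE X n) := by
  rw [isZero_stupidTrunc_iff]
  exact ⟨fun i => hX _ (by simp)⟩

/-- The projection of `σ_{≥ m} X` onto its lowest term `X.X m`, placed in degree `m`. -/
noncomputable def stupidTruncGEπ (m : ℤ) :
    stupidTruncGE X m ⟶ (single C (.up ℤ) m).obj (X.X m) :=
  mkHomToSingle ((stupidTruncGEι X m).f m) fun i hi =>
    (isZero_stupidTruncGE_X X (by rw [up_Rel] at hi; lia)).eq_of_src _ _

lemma isIso_stupidTruncGEπ_f (m : ℤ) : IsIso ((stupidTruncGEπ X m).f m) := by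
  have := isIso_stupidTruncGEι_f X (le_refl m)
  rw [stupidTruncGEπ, mkHomToSingle_f]
  infer_instance

lemma stupidTruncGETransition_comp_π {p m : ℤ} (h : m < p) :
    stupidTruncGETransition X h.le ≫ stupidTruncGEπ X m = 0 :=
  to_single_hom_ext ((isZero_stupidTruncGE_X X h).eq_of_src _ _)

lemma stupidTruncGE_shortExact {A : Type*} [Category* A] [Abelian A] (X : CochainComplex A ℤ)
    (m : ℤ) :
    (ShortComplex.mk _ _ (stupidTruncGETransition_comp_π X (lt_add_one m))).ShortExact := by
  refine shortExact_of_degreewise_shortExact _ fun i => ?_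
  by_cases hi : i = m
  · subst hi
    exact (ShortComplex.Splitting.ofIsZeroOfIsIso _ (isZero_stupidTruncGE_X X (lt_add_one i))
      (isIso_stupidTruncGEπ_f X i)).shortExact
  · exact (ShortComplex.Splitting.ofIsIsoOfIsZero _
      (isIso_stupidTruncGETransition_f X (lt_add_one m).le (by lia))
      (isZero_single_obj_X (.up ℤ) m _ i hi)).shortExact

end StupidTruncGE

section BoundedAbove

open DerivedCategory

variable {A : Type*} [Category* A] [Abelian A] [HasDerivedCategory.{w} A]
  [HasCoproducts.{u} (DerivedCategory A)] {P : DerivedCategory A → Prop}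

lemma IsLocalizing.prop_Q_of_isColimit (hP : IsLocalizing.{u} (DerivedCategory A) P)
    [HasColimitsOfShape (Discrete ℕ) A] [HasExactColimitsOfShape (Discrete ℕ) A]
    {F : ℕ ⥤ CochainComplex A ℤ} {c : Cocone F} (hc : IsColimit c)
    (hF : ∀ n i, IsSplitMono ((F.map (homOfLE (Nat.le_succ n))).f i))
    (h : ∀ n, P (Q.obj (F.obj n))) : P (Q.obj c.pt) := by
  have ha := coproductIsCoproduct F.obj
  have hQa := hP.prop_of_isColimit_cofan (isColimitCofanMkQ ha) h
  exact hP.ext_closed₃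
    (triangleOfSES_distinguished (telescope_shortExact ha hc hF)) hQa hQa

lemma IsLocalizing.prop_Q_single (hP : IsLocalizing.{u} (DerivedCategory A) P) {M : A}
    (hM : P ((singleFunctor A 0).obj M)) (m : ℤ) :
    P (Q.obj ((HomologicalComplex.single A (.up ℤ) m).obj M)) := by
  have e : ((singleFunctor A 0).obj M)⟦-m⟧ ≅ (singleFunctor A m).obj M :=
    ((singleFunctors A).shiftIso (-m) m 0 (by lia)).app M
  exact hP.iso_closed e (hP.shift_closed _ (-m) hM)

lemma IsLocalizing.prop_Q_stupidTruncGE (hP : IsLocalizing.{u} (DerivedCategory A) P)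
    {X : CochainComplex A ℤ} (hX : ∀ i, P ((singleFunctor A 0).obj (X.X i))) {n : ℤ}
    (hn : ∀ i, n ≤ i → IsZero (X.X i)) (k : ℕ) : P (Q.obj (stupidTruncGE X (n - k))) := by
  induction k with
  | zero => exact hP.zero _ (Q.map_isZero (isZero_stupidTruncGE X (by simpa using hn)))
  | succ k ih =>
    have hk : n - k = n - (k + 1 : ℕ) + 1 := by lia
    rw [hk] at ih
    exact hP.ext_closed _
      (triangleOfSES_distinguished (stupidTruncGE_shortExact X _)) ih (hP.prop_Q_single (hX _) _)

theorem bounded_above_termwise_in_localizing_general [HasColimitsOfShape (Discrete ℕ) A]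
    [HasExactColimitsOfShape (Discrete ℕ) A] (hP : IsLocalizing.{u} (DerivedCategory A) P)
    (X : CochainComplex A ℤ) (hbdd : ∃ n, ∀ i, n < i → IsZero (X.X i))
    (hterms : ∀ i, P ((singleFunctor A 0).obj (X.X i))) : P (Q.obj X) := by
  obtain ⟨n, hn⟩ := hbdd
  exact hP.prop_Q_of_isColimit (isColimitStupidTruncGECocone X (n + 1))
    (fun k i => isSplitMono_stupidTruncGETransition_f X (by lia) i)
    (hP.prop_Q_stupidTruncGE hterms hn)

end BoundedAbove

theorem bounded_above_termwise_in_localizing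
    (R : Type u) [Ring R] [HasDerivedCategory.{w} (ModuleCat.{u} R)]
    [HasCoproducts.{u} (DerivedCategory (ModuleCat.{u} R))]
    (C : DerivedCategory (ModuleCat.{u} R) → Prop)
    (hC : IsLocalizing.{u} (DerivedCategory (ModuleCat.{u} R)) C)
    (X : CochainComplex (ModuleCat.{u} R) ℤ)
    (hbdd : ∃ n : ℤ, ∀ i : ℤ, n < i → IsZero (X.X i))
    (hterms : ∀ i : ℤ,
      C ((DerivedCategory.singleFunctor (ModuleCat.{u} R) 0).obj (X.X i))) :
    C (DerivedCategory.Q.obj X) :=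
  bounded_above_termwise_in_localizing_general hC X hbdd hterms
end

section
/- Let F : Mod B → Mod B be an additive endofunctor such that L_iF(F^j(P)) = 0 for every projective B-module P and all i, j ≥ 1 (where L_iF denotes the i-th left derived functor). Then for a B-module X the following are equivalent: (i) L_iF(F^j(X)) = 0 for all i ≥ 1 and j ≥ 0; (ii) L_iF^s(F^j(X)) = 0 for all i, s ≥ 1 and j ≥ 0; (iii) L_iF^j(X) = 0 for all i, j ≥ 1. -/
/-!
STATEMENT 13: Let `F : Mod B ⥤ Mod B` be a (right exact) additive endofunctor
such that `L_iF(F^j(P)) = 0` for every projective `B`-module `P` and all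
`i, j ≥ 1`.  Then for a `B`-module `X` the following are equivalent:
(i)   `L_iF(F^j(X)) = 0` for all `i ≥ 1` and `j ≥ 0`;
(ii)  `L_iF^s(F^j(X)) = 0` for all `i, s ≥ 1` and `j ≥ 0`;
(iii) `L_iF^j(X) = 0` for all `i, j ≥ 1`.
-/

open CategoryTheory CategoryTheory.Limits

universe u

variable {B : Type u} [Ring B]

/-- The `j`-fold composition power of an endofunctor, with `F^0` the
identity functor. -/
def funPow (F : ModuleCat.{u} B ⥤ ModuleCat.{u} B) : ℕ → (ModuleCat.{u} B ⥤ ModuleCat.{u} B)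
  | 0 => 𝟭 _
  | (j + 1) => funPow F j ⋙ F

instance (F : ModuleCat.{u} B ⥤ ModuleCat.{u} B) [F.Additive] (j : ℕ) :
    (funPow F j).Additive := by
  induction j with
  | zero => exact inferInstanceAs (𝟭 _).Additive
  | succ j ih => exact inferInstanceAs (funPow F j ⋙ F).Additive

/-!
Short complexes in an abelian category `C` with enough projectives again form such a category, whose
projectives are the direct summands of `P₁ ⟶ P₁ ⊞ P₂ ⟶ P₂ ⊞ P₃` with `Pᵢ` projective. So the first
two terms of a projective resolution of a short exact sequence `0 ⟶ X₁ ⟶ X₂ ⟶ X₃ ⟶ 0`, taken in the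
category of short complexes, resolve `X₁` and `X₂`, and the degreewise split cokernel of the map
between them resolves `X₃`. This gives the long exact sequence of left derived functors.

Let `F` and `G` be right exact. If `G` sends projectives to `F`-acyclic objects and `X` is
`G`-acyclic, then `G` preserves the exactness of `0 ⟶ K ⟶ P ⟶ X ⟶ 0` with `P` projective, and
dimension shifting along it and its image gives `LᵢF(GX) ≅ Lᵢ(FG)X`. Taking `G = F^j` shows, by
induction on `j`, that all `F^j(X)` are `F`-acyclic if and only if `X` is `F^j`-acyclic for all `j`;
applied to `X` and to every `F^j(X)`, this is the theorem.
-/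

section FreeShortComplex

variable {C : Type*} [Category* C] [Preadditive C] [HasBinaryBiproducts C]

/-- The short complex `P₁ ⟶ P₁ ⊞ P₂ ⟶ P₂ ⊞ P₃` freely generated by one object in each position. -/
noncomputable abbrev freeShortComplex (P₁ P₂ P₃ : C) : ShortComplex C :=
  ShortComplex.mk (biprod.inl : P₁ ⟶ P₁ ⊞ P₂) (biprod.snd ≫ biprod.inl : _ ⟶ P₂ ⊞ P₃) (by simp)

variable {P₁ P₂ P₃ : C} {S : ShortComplex C}

/-- The morphism out of `freeShortComplex P₁ P₂ P₃` determined by its values on generators. -/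
@[simps]
noncomputable def freeShortComplexDesc (a₁ : P₁ ⟶ S.X₁) (a₂ : P₂ ⟶ S.X₂) (a₃ : P₃ ⟶ S.X₃) :
    freeShortComplex P₁ P₂ P₃ ⟶ S where
  τ₁ := a₁
  τ₂ := biprod.desc (a₁ ≫ S.f) a₂
  τ₃ := biprod.desc (a₂ ≫ S.g) a₃

lemma freeShortComplex_hom_ext {φ ψ : freeShortComplex P₁ P₂ P₃ ⟶ S} (h₁ : φ.τ₁ = ψ.τ₁)
    (h₂ : biprod.inr ≫ φ.τ₂ = biprod.inr ≫ ψ.τ₂)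
    (h₃ : biprod.inr ≫ φ.τ₃ = biprod.inr ≫ ψ.τ₃) : φ = ψ := by
  have τ₂_eq : φ.τ₂ = ψ.τ₂ := biprod.hom_ext' _ _ (by rw [← φ.comm₁₂, ← ψ.comm₁₂, h₁]) h₂
  have inr_inl {χ : freeShortComplex P₁ P₂ P₃ ⟶ S} :
      biprod.inl ≫ χ.τ₃ = biprod.inr ≫ χ.τ₂ ≫ S.g := by simp [χ.comm₂₃]
  exact ShortComplex.hom_ext _ _ h₁ τ₂_eq
    (biprod.hom_ext' _ _ (by rw [inr_inl, inr_inl, τ₂_eq]) h₃)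

instance projective_freeShortComplex [HasPushouts C] [Projective P₁] [Projective P₂]
    [Projective P₃] : Projective (freeShortComplex P₁ P₂ P₃) where
  factors {T U} φ e _ := by
    have : Epi e.τ₁ := inferInstanceAs (Epi (ShortComplex.π₁.map e))
    have : Epi e.τ₂ := inferInstanceAs (Epi (ShortComplex.π₂.map e))
    have : Epi e.τ₃ := inferInstanceAs (Epi (ShortComplex.π₃.map e))
    exact ⟨freeShortComplexDesc (Projective.factorThru φ.τ₁ e.τ₁)
      (Projective.factorThru (biprod.inr ≫ φ.τ₂) e.τ₂)
      (Projective.factorThru (biprod.inr ≫ φ.τ₃) e.τ₃),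
      freeShortComplex_hom_ext (by simp) (by simp) (by simp)⟩

lemma epi_freeShortComplexDesc (a₁ : P₁ ⟶ S.X₁) (a₂ : P₂ ⟶ S.X₂) (a₃ : P₃ ⟶ S.X₃)
    [Epi a₁] [Epi a₂] [Epi a₃] : Epi (freeShortComplexDesc a₁ a₂ a₃) := by
  refine Preadditive.epi_of_cancel_zero _ fun ψ hψ => ?_
  have h₁ := congr_arg ShortComplex.Hom.τ₁ hψ
  have h₂ := biprod.inr ≫= congr_arg ShortComplex.Hom.τ₂ hψ
  have h₃ := biprod.inr ≫= congr_arg ShortComplex.Hom.τ₃ hψ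
  ext
  · simpa [← cancel_epi a₁] using h₁
  · simpa [← cancel_epi a₂] using h₂
  · simpa [← cancel_epi a₃] using h₃

variable [HasPushouts C] [EnoughProjectives C]

/-- The cover of `S` by the free short complex on projectives covering its three objects. -/
noncomputable def freePresentation (S : ShortComplex C) : ProjectivePresentation S where
  p := freeShortComplex (Projective.over S.X₁) (Projective.over S.X₂) (Projective.over S.X₃)
  f := freeShortComplexDesc (Projective.π _) (Projective.π _) (Projective.π _)
  epi := epi_freeShortComplexDesc _ _ _

instance enoughProjectives_shortComplex : EnoughProjectives (ShortComplex C) where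
  presentation S := ⟨freePresentation S⟩

/-- A projective short complex is a direct summand of the free short complex covering it. -/
noncomputable def retractFreePresentation (T : ShortComplex C) [Projective T] :
    Retract T (freePresentation T).p where
  i := Projective.factorThru (𝟙 T) (freePresentation T).f
  r := (freePresentation T).f

instance preservesProjectiveObjects_π₁ :
    (ShortComplex.π₁ : ShortComplex C ⥤ C).PreservesProjectiveObjects where
  projective_obj {T} _ :=
    have : Projective (ShortComplex.π₁.obj (freePresentation T).p) :=
      inferInstanceAs (Projective (Projective.over T.X₁))
    ((retractFreePresentation T).map ShortComplex.π₁).projective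

instance preservesProjectiveObjects_π₂ :
    (ShortComplex.π₂ : ShortComplex C ⥤ C).PreservesProjectiveObjects where
  projective_obj {T} _ :=
    have : Projective (ShortComplex.π₂.obj (freePresentation T).p) :=
      inferInstanceAs (Projective (Projective.over T.X₁ ⊞ Projective.over T.X₂))
    ((retractFreePresentation T).map ShortComplex.π₂).projective

lemma isSplitMono_f_of_projective (T : ShortComplex C) [Projective T] : IsSplitMono T.f := by
  let ρ : Retract T (freeShortComplex (Projective.over T.X₁) (Projective.over T.X₂)
      (Projective.over T.X₃)) := retractFreePresentation T
  have comm : T.f ≫ ρ.i.τ₂ = ρ.i.τ₁ ≫ biprod.inl := ρ.i.comm₁₂.symm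
  have retract : ρ.i.τ₁ ≫ ρ.r.τ₁ = 𝟙 _ := congr_arg ShortComplex.Hom.τ₁ ρ.retract
  exact ⟨⟨ρ.i.τ₂ ≫ biprod.fst ≫ ρ.r.τ₁, by rw [reassoc_of% comm]; simp [retract]⟩⟩

end FreeShortComplex

section Preadditive

variable {C : Type*} [Category* C] [Preadditive C]

instance additive_π₁ : (ShortComplex.π₁ : ShortComplex C ⥤ C).Additive where

instance additive_π₂ : (ShortComplex.π₂ : ShortComplex C ⥤ C).Additive where

lemma projective_X₃_of_isSplitMono_f [CategoryTheory.Balanced C] {S : ShortComplex C}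
    (hS : S.ShortExact) [IsSplitMono S.f] [Projective S.X₂] : Projective S.X₃ :=
  let σ := ShortComplex.Splitting.ofExactOfRetraction S hS.exact (retraction S.f) (by simp) hS.epi_g
  Retract.projective ⟨σ.s, S.g, σ.s_g⟩

end Preadditive

section Horseshoe

variable {C : Type*} [Category* C] [Abelian C]

/-- The comparison map between the images of a projective resolution under two functors induced
by a natural transformation between them. -/
noncomputable def mapProjectiveResolutionHom {D : Type*} [Category* D] [Abelian D] {G G' : D ⥤ C}
    [G.Additive] [G'.Additive] [G.PreservesProjectiveObjects] [G'.PreservesProjectiveObjects]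
    [G.PreservesHomology] [G'.PreservesHomology] (α : G ⟶ G') {Z : D}
    (R : ProjectiveResolution Z) :
    (G.mapProjectiveResolution R).Hom (G'.mapProjectiveResolution R) (α.app Z) where
  hom := (NatTrans.mapHomologicalComplex α _).app R.complex
  hom_f_zero_comp_π_f_zero := by
    simp only [Functor.mapProjectiveResolution, ChainComplex.single₀_obj_zero,
      NatTrans.mapHomologicalComplex_app_f, HomologicalComplex.comp_f,
      Functor.mapHomologicalComplex_map_f,
      HomologicalComplex.singleMapHomologicalComplex_hom_app_self, ChainComplex.single₀ObjXSelf,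
      Iso.refl_hom, CategoryTheory.Functor.map_id, Iso.refl_inv, Category.comp_id,
      HomologicalComplex.single_map_f_self, Category.id_comp]
    -- `Z` and the degree `0` term of its single complex agree only up to unfolding, so the
    -- remaining identities are invisible to `simp`.
    exact (congrArg (_ ≫ ·) (Category.comp_id _)).trans
      ((α.naturality _).symm.trans (congrArg (· ≫ _) (Category.comp_id _).symm))

lemma exists_shortExact_of_isSplitMono {S : ShortComplex C} (hS : S.ShortExact)
    {P₁ : ProjectiveResolution S.X₁} {P₂ : ProjectiveResolution S.X₂} (φ : P₁.Hom P₂ S.f)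
    [∀ n, IsSplitMono (φ.hom.f n)] :
    ∃ (P₃ : ProjectiveResolution S.X₃) (ψ : P₂.Hom P₃ S.g) (w : φ.hom ≫ ψ.hom = 0),
      (ShortComplex.mk φ.hom ψ.hom w).ShortExact := by
  have : Mono φ.hom := HomologicalComplex.mono_of_mono_f φ.hom fun n => inferInstance
  let K := ShortComplex.mk φ.hom (cokernel.π φ.hom) (cokernel.condition φ.hom)
  have hK : K.ShortExact := { exact := ShortComplex.exact_cokernel φ.hom }
  have w : φ.hom ≫ P₂.π ≫ (ChainComplex.single₀ C).map S.g = 0 := by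
    rw [φ.hom_comp_π_assoc, ← Functor.map_comp, S.zero, Functor.map_zero, comp_zero]
  let τ : K ⟶ S.map (ChainComplex.single₀ C) :=
    { τ₁ := P₁.π
      τ₂ := P₂.π
      τ₃ := cokernel.desc φ.hom (P₂.π ≫ (ChainComplex.single₀ C).map S.g) w
      comm₁₂ := φ.hom_comp_π.symm
      comm₂₃ := (cokernel.π_desc ..).symm }
  have quasiIso_τ₃ : QuasiIso τ.τ₃ := HomologicalComplex.HomologySequence.quasiIso_τ₃ τ hK
    (hS.map_of_exact _) P₁.quasiIso P₂.quasiIso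
  have projective_X₃ (n : ℕ) : Projective (K.X₃.X n) :=
    have : IsSplitMono (K.map (HomologicalComplex.eval _ _ n)).f :=
      inferInstanceAs (IsSplitMono (φ.hom.f n))
    have : Projective (K.map (HomologicalComplex.eval _ _ n)).X₂ := P₂.projective n
    projective_X₃_of_isSplitMono_f (hK.map_of_exact (HomologicalComplex.eval _ _ n))
  exact ⟨{ complex := K.X₃, π := τ.τ₃, quasiIso := quasiIso_τ₃ },
    ⟨K.g, congr_arg (HomologicalComplex.Hom.f · 0) τ.comm₂₃.symm⟩, K.zero, hK⟩

variable [EnoughProjectives C]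

lemma exists_shortExact_projectiveResolution {S : ShortComplex C} (hS : S.ShortExact) :
    ∃ (P₁ : ProjectiveResolution S.X₁) (P₂ : ProjectiveResolution S.X₂)
      (P₃ : ProjectiveResolution S.X₃) (φ : P₁.Hom P₂ S.f) (ψ : P₂.Hom P₃ S.g)
      (w : φ.hom ≫ ψ.hom = 0), (ShortComplex.mk φ.hom ψ.hom w).ShortExact :=
  let R := projectiveResolution S
  let φ := mapProjectiveResolutionHom ShortComplex.π₁Toπ₂ R
  have (n : ℕ) : IsSplitMono (φ.hom.f n) := isSplitMono_f_of_projective (R.complex.X n)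
  ⟨_, _, (exists_shortExact_of_isSplitMono hS φ).imp fun _ h => ⟨φ, h⟩⟩

end Horseshoe

section LeftDerived

variable {C D : Type*} [Category* C] [Category* D] [Abelian C] [Abelian D]

lemma shortExact_map_mapHomologicalComplex {ι : Type*} {c : ComplexShape ι} (F : C ⥤ D)
    [F.Additive] {K : ShortComplex (HomologicalComplex C c)} (hK : K.ShortExact)
    [∀ n, Projective (K.X₃.X n)] : (K.map (F.mapHomologicalComplex c)).ShortExact :=
  HomologicalComplex.shortExact_of_degreewise_shortExact _ fun n =>
    have : Projective (K.map (HomologicalComplex.eval _ _ n)).X₃ :=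
      inferInstanceAs (Projective (K.X₃.X n))
    ((hK.map_of_exact (HomologicalComplex.eval _ _ n)).splittingOfProjective.map F).shortExact

lemma exact_mk_of_iso {A : Type*} [Category* A] [HasZeroMorphisms A] {S : ShortComplex A}
    (hS : S.Exact) {X₁ X₂ X₃ : A} (e₁ : X₁ ≅ S.X₁)
    (e₂ : X₂ ≅ S.X₂) (e₃ : X₃ ≅ S.X₃) {f : X₁ ⟶ X₂} {g : X₂ ⟶ X₃}
    (hf : f ≫ e₂.hom = e₁.hom ≫ S.f) (hg : g ≫ e₃.hom = e₂.hom ≫ S.g) :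
    ∃ w : f ≫ g = 0, (ShortComplex.mk f g w).Exact := by
  have w : f ≫ g = 0 := by
    rw [← cancel_mono e₃.hom, Category.assoc, hg, reassoc_of% hf, S.zero, comp_zero, zero_comp]
  exact ⟨w, ShortComplex.exact_of_iso (ShortComplex.isoMk e₁ e₂ e₃ hf.symm hg.symm).symm hS⟩

variable [EnoughProjectives C] (F : C ⥤ D) [F.Additive]

lemma leftDerived_map_comp_isoLeftDerivedObj_hom {X Y : C} {f : X ⟶ Y}
    {P : ProjectiveResolution X} {Q : ProjectiveResolution Y} (φ : P.Hom Q f) (n : ℕ) :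
    (F.leftDerived n).map f ≫ (Q.isoLeftDerivedObj F n).hom =
      (P.isoLeftDerivedObj F n).hom ≫
        HomologicalComplex.homologyMap ((F.mapHomologicalComplex _).map φ.hom) n :=
  P.isoLeftDerivedObj_hom_naturality f Q φ.hom
    (φ.hom_f_zero_comp_π_f_zero.trans
      (congrArg (P.π.f 0 ≫ ·) (ChainComplex.single₀_map_f_zero f))) F n

lemma exists_leftDerived_δ {S : ShortComplex C} (hS : S.ShortExact) (n : ℕ) :
    ∃ δ : (F.leftDerived (n + 1)).obj S.X₃ ⟶ (F.leftDerived n).obj S.X₁,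
      (∃ w, (ShortComplex.mk ((F.leftDerived (n + 1)).map S.g) δ w).Exact) ∧
      ∃ w, (ShortComplex.mk δ ((F.leftDerived n).map S.f) w).Exact := by
  obtain ⟨P₁, P₂, P₃, φ, ψ, w, hK⟩ := exists_shortExact_projectiveResolution hS
  have (i : ℕ) : Projective ((ShortComplex.mk φ.hom ψ.hom w).X₃.X i) := P₃.projective i
  have hFK := shortExact_map_mapHomologicalComplex F hK
  let e₁ := P₁.isoLeftDerivedObj F n
  let e₃ := P₃.isoLeftDerivedObj F (n + 1)
  let δ := (e₃.hom ≫ hFK.δ (n + 1) n rfl) ≫ e₁.inv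
  have δ_comp : δ ≫ e₁.hom = e₃.hom ≫ hFK.δ (n + 1) n rfl := (Iso.eq_comp_inv _).1 rfl
  exact ⟨δ, exact_mk_of_iso (hFK.homology_exact₃ (n + 1) n rfl) _ e₃ e₁
      (leftDerived_map_comp_isoLeftDerivedObj_hom F ψ (n + 1)) δ_comp,
    exact_mk_of_iso (hFK.homology_exact₁ (n + 1) n rfl) e₃ e₁ _ δ_comp
      (leftDerived_map_comp_isoLeftDerivedObj_hom F φ n)⟩

lemma nonempty_leftDerived_succ_iso_kernel {S : ShortComplex C} (hS : S.ShortExact) {n : ℕ}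
    (h₂ : IsZero ((F.leftDerived (n + 1)).obj S.X₂)) :
    Nonempty ((F.leftDerived (n + 1)).obj S.X₃ ≅ kernel ((F.leftDerived n).map S.f)) := by
  obtain ⟨δ, ⟨_, exact₃⟩, ⟨_, exact₁⟩⟩ := exists_leftDerived_δ F hS n
  have : Mono δ := exact₃.mono_g (h₂.eq_of_src _ _)
  exact ⟨exact₁.fIsKernel.conePointUniqueUpToIso (limit.isLimit _)⟩

lemma nonempty_leftDerived_one_iso_kernel [PreservesFiniteColimits F] {S : ShortComplex C}
    (hS : S.ShortExact) (h₂ : IsZero ((F.leftDerived 1).obj S.X₂)) :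
    Nonempty ((F.leftDerived 1).obj S.X₃ ≅ kernel (F.map S.f)) :=
  (nonempty_leftDerived_succ_iso_kernel F hS h₂).map fun e =>
    e ≪≫ kernel.mapIso _ _ (F.leftDerivedZeroIsoSelf.app _) (F.leftDerivedZeroIsoSelf.app _)
      (F.leftDerivedZeroIsoSelf.hom.naturality S.f)

/-- `X` is acyclic for the left derived functors of `F`. -/
def LeftAcyclic (X : C) : Prop :=
  ∀ i, 1 ≤ i → IsZero ((F.leftDerived i).obj X)

variable {F}

lemma leftAcyclic_of_projective (P : C) [Projective P] : LeftAcyclic F P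
  | i + 1, _ => F.isZero_leftDerived_obj_projective_succ i P

lemma LeftAcyclic.nonempty_leftDerived_succ_succ_iso {S : ShortComplex C}
    (h₂ : LeftAcyclic F S.X₂) (hS : S.ShortExact) (n : ℕ) :
    Nonempty ((F.leftDerived (n + 2)).obj S.X₃ ≅ (F.leftDerived (n + 1)).obj S.X₁) :=
  (nonempty_leftDerived_succ_iso_kernel F hS (h₂ (n + 2) (by lia))).map fun e =>
    e ≪≫ kernelIsoOfEq ((h₂ (n + 1) (by lia)).eq_of_tgt _ 0) ≪≫ kernelZeroIsoSource

lemma LeftAcyclic.X₁_of_shortExact {S : ShortComplex C} (h₂ : LeftAcyclic F S.X₂)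
    (h₃ : LeftAcyclic F S.X₃) (hS : S.ShortExact) : LeftAcyclic F S.X₁
  | i + 1, _ =>
    have ⟨e⟩ := h₂.nonempty_leftDerived_succ_succ_iso hS i
    (h₃ (i + 2) (by lia)).of_iso e.symm

lemma LeftAcyclic.shortExact_map [PreservesFiniteColimits F] {S : ShortComplex C}
    (h₃ : LeftAcyclic F S.X₃) (hS : S.ShortExact) : (S.map F).ShortExact := by
  obtain ⟨δ, -, ⟨_, exact₁⟩⟩ := exists_leftDerived_δ F hS 0
  have : Mono ((F.leftDerived 0).map S.f) := exact₁.mono_g ((h₃ 1 le_rfl).eq_of_src _ _)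
  have mono_f : Mono (F.map S.f) :=
    ((MorphismProperty.monomorphisms D).arrow_mk_iso_iff
      (Arrow.isoOfNatIso F.leftDerivedZeroIsoSelf (Arrow.mk S.f))).1 this
  have ⟨exact, epi_g⟩ := F.preservesFiniteColimits_iff_forall_exact_map_and_epi.1 inferInstance S hS
  exact { exact, mono_f, epi_g }

/-- The short complex `0 ⟶ K ⟶ P ⟶ X ⟶ 0` exhibiting the syzygy `K` of `X` with respect to its
chosen projective presentation `P`. -/
noncomputable abbrev syzygyShortComplex (X : C) : ShortComplex C :=
  ShortComplex.mk (kernel.ι (Projective.π X)) (Projective.π X) (kernel.condition _)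

lemma shortExact_syzygyShortComplex (X : C) : (syzygyShortComplex X).ShortExact where
  exact := ShortComplex.exact_kernel _

lemma leftAcyclic_of_preservesMonomorphisms [PreservesFiniteColimits F] [F.PreservesMonomorphisms]
    (X : C) : LeftAcyclic F X := by
  have acyclic_over (X : C) : LeftAcyclic F (syzygyShortComplex X).X₂ := leftAcyclic_of_projective _
  suffices ∀ n X, IsZero ((F.leftDerived (n + 1)).obj X) from fun
    | n + 1, _ => this n X
  intro n
  induction n with
  | zero =>
    intro X
    obtain ⟨e⟩ := nonempty_leftDerived_one_iso_kernel F (shortExact_syzygyShortComplex X)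
      (acyclic_over X 1 le_rfl)
    exact (isZero_kernel_of_mono _).of_iso e
  | succ n ih =>
    intro X
    obtain ⟨e⟩ := (acyclic_over X).nonempty_leftDerived_succ_succ_iso
      (shortExact_syzygyShortComplex X) n
    exact (ih _).of_iso e

end LeftDerived

section Comparison

variable {C D E : Type*} [Category* C] [Category* D] [Category* E] [Abelian C] [Abelian D]
  [Abelian E] [EnoughProjectives C] [EnoughProjectives D] {G : C ⥤ D} {F : D ⥤ E} [G.Additive]
  [F.Additive] [PreservesFiniteColimits G] [PreservesFiniteColimits F]

lemma LeftAcyclic.nonempty_leftDerived_comp_iso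
    (hG : ∀ (P : C) [Projective P], LeftAcyclic F (G.obj P)) {X : C} (hX : LeftAcyclic G X)
    (n : ℕ) : Nonempty ((F.leftDerived n).obj (G.obj X) ≅ ((G ⋙ F).leftDerived n).obj X) := by
  have hS (X : C) := shortExact_syzygyShortComplex X
  have acyclic_over {H : C ⥤ E} [H.Additive] (X : C) : LeftAcyclic H (syzygyShortComplex X).X₂ :=
    leftAcyclic_of_projective _
  induction n using Nat.twoStepInduction generalizing X with
  | zero => exact ⟨F.leftDerivedZeroIsoSelf.app _ ≪≫ ((G ⋙ F).leftDerivedZeroIsoSelf.app X).symm⟩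
  | one =>
    obtain ⟨e⟩ := nonempty_leftDerived_one_iso_kernel F (hX.shortExact_map (hS X)) (hG _ 1 le_rfl)
    obtain ⟨e'⟩ := nonempty_leftDerived_one_iso_kernel (G ⋙ F) (hS X) (acyclic_over X 1 le_rfl)
    exact ⟨e ≪≫ e'.symm⟩
  | more n _ ih =>
    obtain ⟨e⟩ := LeftAcyclic.nonempty_leftDerived_succ_succ_iso (hG _) (hX.shortExact_map (hS X)) n
    obtain ⟨e'⟩ := (acyclic_over (H := G ⋙ F) X).nonempty_leftDerived_succ_succ_iso (hS X) n
    obtain ⟨e''⟩ := ih (LeftAcyclic.X₁_of_shortExact (leftAcyclic_of_projective _) hX (hS X))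
    exact ⟨e ≪≫ e'' ≪≫ e'.symm⟩

lemma LeftAcyclic.comp_iff (hG : ∀ (P : C) [Projective P], LeftAcyclic F (G.obj P)) {X : C}
    (hX : LeftAcyclic G X) : LeftAcyclic (G ⋙ F) X ↔ LeftAcyclic F (G.obj X) :=
  forall₂_congr fun i _ => (hX.nonempty_leftDerived_comp_iso hG i).some.isZero_iff.symm

end Comparison

section EndoPow

variable {C : Type*} [Category* C]

/-- The `j`-fold composition power of an endofunctor of any category. -/
def endoPow (F : C ⥤ C) : ℕ → (C ⥤ C)
  | 0 => 𝟭 _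
  | j + 1 => endoPow F j ⋙ F

lemma endoPow_obj_endoPow_obj (F : C ⥤ C) (X : C) (i : ℕ) :
    ∀ j, (endoPow F j).obj ((endoPow F i).obj X) = (endoPow F (i + j)).obj X
  | 0 => rfl
  | j + 1 => congrArg F.obj (endoPow_obj_endoPow_obj F X i j)

variable [Abelian C] (F : C ⥤ C)

instance additive_endoPow [F.Additive] : ∀ j, (endoPow F j).Additive
  | 0 => inferInstanceAs (𝟭 C).Additive
  | j + 1 =>
    have := additive_endoPow j
    inferInstanceAs (endoPow F j ⋙ F).Additive

instance preservesFiniteColimits_endoPow [PreservesFiniteColimits F] :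
    ∀ j, PreservesFiniteColimits (endoPow F j)
  | 0 => inferInstanceAs (PreservesFiniteColimits (𝟭 C))
  | j + 1 =>
    have := preservesFiniteColimits_endoPow j
    comp_preservesFiniteColimits (endoPow F j) F

variable [EnoughProjectives C] [F.Additive] [PreservesFiniteColimits F]

lemma forall_leftAcyclic_obj_endoPow_iff
    (hF : ∀ (P : C) [Projective P] (j : ℕ), LeftAcyclic F ((endoPow F j).obj P)) (X : C) :
    (∀ j, LeftAcyclic F ((endoPow F j).obj X)) ↔ ∀ j, LeftAcyclic (endoPow F j) X := by
  have succ_iff {j : ℕ} (hj : LeftAcyclic (endoPow F j) X) :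
      LeftAcyclic (endoPow F (j + 1)) X ↔ LeftAcyclic F ((endoPow F j).obj X) :=
    hj.comp_iff fun P _ => hF P j
  refine ⟨fun h j => ?_, fun h j => (succ_iff (h j)).1 (h (j + 1))⟩
  induction j with
  | zero => exact leftAcyclic_of_preservesMonomorphisms (F := 𝟭 C) X
  | succ j ih => exact (succ_iff ih).2 (h j)

theorem derived_vanishing_tfae_general
    (hproj : ∀ P : C, Projective P → ∀ i j : ℕ, 1 ≤ i → 1 ≤ j →
      IsZero ((F.leftDerived i).obj ((endoPow F j).obj P)))
    (X : C) :
    List.TFAE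
      [ (∀ i j : ℕ, 1 ≤ i → IsZero ((F.leftDerived i).obj ((endoPow F j).obj X))),
        (∀ i s j : ℕ, 1 ≤ i → 1 ≤ s →
          IsZero (((endoPow F s).leftDerived i).obj ((endoPow F j).obj X))),
        (∀ i j : ℕ, 1 ≤ i → 1 ≤ j → IsZero (((endoPow F j).leftDerived i).obj X)) ] := by
  have hF (P : C) [hP : Projective P] : ∀ j, LeftAcyclic F ((endoPow F j).obj P)
    | 0 => leftAcyclic_of_projective P
    | j + 1 => fun i hi => hproj P hP i (j + 1) hi j.succ_pos
  tfae_have 1 → 2 := fun h i s j hi _ =>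
    (forall_leftAcyclic_obj_endoPow_iff F hF _).1
      (fun k i hi => by rw [endoPow_obj_endoPow_obj]; exact h i (j + k) hi) s i hi
  tfae_have 2 → 3 := fun h i s hi hs => h i s 0 hi hs
  tfae_have 3 → 1 := fun h i j hi =>
    (forall_leftAcyclic_obj_endoPow_iff F hF X).2
      (fun
        | 0 => leftAcyclic_of_preservesMonomorphisms (F := 𝟭 C) X
        | s + 1 => fun i hi => h i (s + 1) hi s.succ_pos) j i hi
  tfae_finish

end EndoPow

lemma funPow_eq_endoPow (F : ModuleCat.{u} B ⥤ ModuleCat.{u} B) : ∀ j, funPow F j = endoPow F j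
  | 0 => rfl
  | j + 1 => congrArg (· ⋙ F) (funPow_eq_endoPow F j)

theorem derived_vanishing_tfae
    (F : ModuleCat.{u} B ⥤ ModuleCat.{u} B) [F.Additive]
    [PreservesFiniteColimits F]
    (hproj : ∀ (P : ModuleCat.{u} B), Projective P → ∀ i j : ℕ, 1 ≤ i → 1 ≤ j →
      IsZero ((F.leftDerived i).obj ((funPow F j).obj P)))
    (X : ModuleCat.{u} B) :
    List.TFAE
      [ (∀ i j : ℕ, 1 ≤ i →
          IsZero ((F.leftDerived i).obj ((funPow F j).obj X))),
        (∀ i s j : ℕ, 1 ≤ i → 1 ≤ s →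
          IsZero (((funPow F s).leftDerived i).obj ((funPow F j).obj X))),
        (∀ i j : ℕ, 1 ≤ i → 1 ≤ j →
          IsZero (((funPow F j).leftDerived i).obj X)) ] := by
  simp only [funPow_eq_endoPow] at hproj ⊢
  exact derived_vanishing_tfae_general F hproj X
end
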